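/- For any instance with n agents having identical additive valuations (v_i = v for every agent i) over a finite set M of indivisible goods and equal entitlements 1/n, there exists an allocation (A_1,…,A_n) of M such that every agent receives strictly more than a 3/4 fraction of her AnyPrice share: v(A_i) > (3/4)·APS(1/n, v, M) for every agent i (provided APS(1/n, v, M) > 0). -/

import Mathlib

open Finset

def IsPartition {ι : Type*} [DecidableEq ι] (M : Finset ι) {n : ℕ} (A : Fin n → Finset ι) : Prop :=
  (∀ i, A i ⊆ M) ∧ (∀ i j, i ≠ j → Disjoint (A i) (A j)) ∧ ∀ x ∈ M, ∃ i, x ∈ A i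

/-- The AnyPrice share (price-based definition): the minimum over all nonnegative
price vectors summing to 1 of the best value of an affordable bundle. -/
noncomputable def APS {ι : Type*} (b : ℝ) (v : Finset ι → ℝ) (M : Finset ι) : ℝ :=
  sInf {t : ℝ | ∃ p : ι → ℝ, (∀ j ∈ M, 0 ≤ p j) ∧ (∑ j ∈ M, p j) = 1 ∧
    t = sSup {u : ℝ | ∃ S, S ⊆ M ∧ (∑ j ∈ S, p j) ≤ b ∧ u = v S}}

/-!
Scale the values so that the AnyPrice share is 1 and hand out the items in decreasing order of
value, each to a bin of currently least value. Suppose that some bin ends up worth at most `3 / 4`.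
Then there is a price `g` of item values for which every bundle worth at least 1 costs at least 1,
while every bin costs at most 1 and the poor bin less than 1. All items together cost less than `n`,
so once the prices are normalised to sum to 1, every bundle affordable with budget `1 / n` is worth
less than 1, contradicting the definition of the share.

Items worth more than `3 / 4` get price 1, and the others a price that increases with the value and
is subadditive. The identity works if no item worth at most `3 / 4` lifts a bin above 1. Otherwise
consider the last such item, of value `s`, and the load `a` of its bin just before. At that time
every bin is worth at least `a`, and `a + s > 1`. The price is then a staircase with soft steps: two
steps of period `a` if no two items had shared a bin worth at most `3 / 4` until then, and three
steps of period `3 / 4 - s` otherwise.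
-/

namespace AnyPriceShare

/-- The ceiling function with each jump replaced by a ramp of slope `c` that starts at the integer:
the identity for `c = 1`, and `⌈x⌉` in the limit `c → ∞`. -/
noncomputable def softCeil (c x : ℝ) : ℝ := ⌊x⌋ + min 1 (c * Int.fract x)

section SoftCeil

variable {c : ℝ} {k : ℤ} {x y : ℝ}

@[simp]
lemma softCeil_zero (c : ℝ) : softCeil c 0 = 0 := by simp [softCeil]

lemma softCeil_of_le_one (hx : c * Int.fract x ≤ 1) : softCeil c x = ⌊x⌋ + c * Int.fract x := by
  rw [softCeil, min_eq_right hx]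

lemma softCeil_of_one_le (hx : 1 ≤ c * Int.fract x) : softCeil c x = ⌊x⌋ + 1 := by
  rw [softCeil, min_eq_left hx]

lemma floor_le_softCeil (hc : 0 ≤ c) (x : ℝ) : (⌊x⌋ : ℝ) ≤ softCeil c x := by
  have := mul_nonneg hc (Int.fract_nonneg x)
  exact le_add_of_nonneg_right (le_min zero_le_one this)

lemma softCeil_le_intCast (hx : x ≤ k) : softCeil c x ≤ k := by
  rcases hx.eq_or_lt with rfl | hlt
  · simp [softCeil]
  · have : (⌊x⌋ : ℝ) + 1 ≤ k := by exact_mod_cast Int.floor_lt.2 hlt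
    exact (add_le_add_right (min_le_left _ _) _).trans this

lemma softCeil_le_add_mul (hc : 1 ≤ c) (hx : k ≤ x) : softCeil c x ≤ k + c * (x - k) := by
  have hfloor : (k : ℝ) ≤ ⌊x⌋ := by exact_mod_cast Int.le_floor.2 hx
  calc softCeil c x ≤ ⌊x⌋ + c * Int.fract x := by
        rw [softCeil]
        gcongr
        exact min_le_right _ _
    _ = k + c * (x - k) - (c - 1) * (⌊x⌋ - k) := by rw [Int.fract]; ring
    _ ≤ k + c * (x - k) := sub_le_self _ (mul_nonneg (by linarith) (by linarith))

lemma add_one_le_softCeil (hc : 0 ≤ c) (hkx : k ≤ x) (hx : 1 ≤ c * (x - k)) :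
    k + 1 ≤ softCeil c x := by
  rcases (Int.le_floor.2 hkx).eq_or_lt with hk | hk
  · rw [softCeil, Int.fract, ← hk, min_eq_left hx]
  · exact le_trans (by exact_mod_cast hk) (floor_le_softCeil hc x)

lemma softCeil_mono (hc : 0 ≤ c) : Monotone (softCeil c) := by
  intro x y hxy
  rcases (Int.floor_mono hxy).eq_or_lt with hfloor | hfloor
  · rw [softCeil, softCeil, Int.fract, Int.fract, hfloor]
    gcongr
  · calc softCeil c x ≤ (⌊x⌋ + 1 : ℤ) :=
          softCeil_le_intCast (by exact_mod_cast (Int.lt_floor_add_one x).le)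
      _ ≤ ⌊y⌋ := by exact_mod_cast hfloor
      _ ≤ softCeil c y := floor_le_softCeil hc y

lemma softCeil_add_le_add_mul (hc : 1 ≤ c) (hy : 0 ≤ y) :
    softCeil c (x + y) ≤ softCeil c x + c * y := by
  have hx := Int.floor_add_fract x
  rcases le_total 1 (c * Int.fract x) with hramp | hramp
  · rw [softCeil_of_one_le hramp]
    rcases le_total (x + y) (⌊x⌋ + 1 : ℤ) with hxy | hxy
    · have := softCeil_le_intCast (c := c) hxy
      push_cast at this
      nlinarith
    · have := softCeil_le_add_mul hc hxy
      push_cast at this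
      nlinarith [Int.fract_lt_one x]
  · rw [softCeil_of_le_one hramp]
    have := softCeil_le_add_mul (k := ⌊x⌋) hc (by linarith [Int.floor_le x] : _ ≤ x + y)
    rw [Int.fract]
    linarith

lemma softCeil_add_intCast (c x : ℝ) (k : ℤ) : softCeil c (x + k) = softCeil c x + k := by
  simp only [softCeil, Int.floor_add_intCast, Int.fract_add_intCast, Int.cast_add]
  ring

lemma softCeil_add_le_of_mul_fract_le_one (hc : 1 ≤ c) (hy : c * Int.fract y ≤ 1) :
    softCeil c (x + y) ≤ softCeil c x + softCeil c y :=
  calc softCeil c (x + y) = softCeil c (x + Int.fract y) + ⌊y⌋ := by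
        rw [← softCeil_add_intCast, add_assoc, Int.fract_add_floor]
    _ ≤ softCeil c x + c * Int.fract y + ⌊y⌋ := by
        gcongr
        exact softCeil_add_le_add_mul hc (Int.fract_nonneg y)
    _ = softCeil c x + softCeil c y := by
        rw [softCeil_of_le_one hy]
        ring

lemma softCeil_add_le (hc : 1 ≤ c) (x y : ℝ) :
    softCeil c (x + y) ≤ softCeil c x + softCeil c y := by
  rcases le_total (c * Int.fract y) 1 with hy | hy
  · exact softCeil_add_le_of_mul_fract_le_one hc hy
  rcases le_total (c * Int.fract x) 1 with hx | hx
  · rw [add_comm x, add_comm (softCeil c x)]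
    exact softCeil_add_le_of_mul_fract_le_one hc hx
  · have hxy : x + y ≤ ((⌊x⌋ + 1) + (⌊y⌋ + 1) : ℤ) := by
      push_cast
      exact add_le_add (Int.lt_floor_add_one x).le (Int.lt_floor_add_one y).le
    have hceil := softCeil_le_intCast (c := c) hxy
    push_cast at hceil
    rwa [softCeil_of_one_le hx, softCeil_of_one_le hy]

end SoftCeil

/-- The price of an item of value `x` on a staircase with steps of length `p` and height `1 / N`,
each consisting of a ramp of length `r` followed by a plateau. -/
noncomputable def stairPrice (N : ℕ) (p r x : ℝ) : ℝ := softCeil (p / r) (x / p) / N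

section StairPrice

variable {N k : ℕ} {p r x : ℝ}

@[simp]
lemma stairPrice_zero (N : ℕ) (p r : ℝ) : stairPrice N p r 0 = 0 := by simp [stairPrice]

lemma stairPrice_mono (hr : 0 < r) (hrp : r ≤ p) : Monotone (stairPrice N p r) := by
  have hp : 0 < p := hr.trans_le hrp
  intro x y hxy
  unfold stairPrice
  gcongr
  exact softCeil_mono (by positivity) (by gcongr)

lemma stairPrice_add_le (hr : 0 < r) (hrp : r ≤ p) (x y : ℝ) :
    stairPrice N p r (x + y) ≤ stairPrice N p r x + stairPrice N p r y := by
  simp only [stairPrice, add_div x y p, ← add_div _ _ (N : ℝ)]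
  gcongr
  exact softCeil_add_le ((one_le_div hr).2 hrp) _ _

lemma stairPrice_le_div (hp : 0 < p) (hx : x ≤ k * p) : stairPrice N p r x ≤ k / N := by
  unfold stairPrice
  gcongr
  exact softCeil_le_intCast (k := k) (by simpa using (div_le_iff₀ hp).2 hx)

lemma stairPrice_le_add_mul (hr : 0 < r) (hrp : r ≤ p) (hx : k * p ≤ x) :
    stairPrice N p r x ≤ k / N + (N * r)⁻¹ * (x - k * p) := by
  have hp : 0 < p := hr.trans_le hrp
  have hk : ((k : ℤ) : ℝ) ≤ x / p := by simpa using (le_div_iff₀ hp).2 hx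
  calc stairPrice N p r x ≤ (k + p / r * (x / p - k)) / N := by
        unfold stairPrice
        gcongr
        exact softCeil_le_add_mul (k := k) ((one_le_div hr).2 hrp) hk
    _ = k / N + (N * r)⁻¹ * (x - k * p) := by field_simp

lemma stairPrice_le_mul (hr : 0 < r) (hrp : r ≤ p) (hx : 0 ≤ x) :
    stairPrice N p r x ≤ (N * r)⁻¹ * x := by
  simpa using stairPrice_le_add_mul (N := N) (k := 0) hr hrp (by simpa : _ ≤ x)

lemma div_le_stairPrice (hr : 0 < r) (hrp : r ≤ p) (hx : k * p + r ≤ x) :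
    (k + 1) / N ≤ stairPrice N p r x := by
  have hp : 0 < p := hr.trans_le hrp
  have hk : ((k : ℤ) : ℝ) ≤ x / p := by simpa using (le_div_iff₀ hp).2 (by linarith)
  have hramp : 1 ≤ p / r * (x / p - (k : ℤ)) := by
    rw [show p / r * (x / p - (k : ℤ)) = (x - k * p) / r by push_cast; field_simp, one_le_div hr]
    linarith
  unfold stairPrice
  gcongr
  exact add_one_le_softCeil (k := k) (by positivity) hk hramp

end StairPrice

/-- `g` is a nonnegative price of nonnegative item values for which every collection of items worth
at least 1 costs at least 1. Collections are multisets, as several items may have the same value. -/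
structure IsCoveringPrice (g : ℝ → ℝ) : Prop where
  nonneg : ∀ x, 0 ≤ x → 0 ≤ g x
  one_le_sum : ∀ s : Multiset ℝ, (∀ x ∈ s, 0 ≤ x) → 1 ≤ s.sum → 1 ≤ (s.map g).sum

/-- The price `h`, changed to 1 on large items, namely those worth more than `θ`. -/
noncomputable def withLarge (θ : ℝ) (h : ℝ → ℝ) (x : ℝ) : ℝ := if θ < x then 1 else h x

section CoveringPrice

variable {θ x : ℝ} {h : ℝ → ℝ}

lemma withLarge_of_lt (hx : θ < x) : withLarge θ h x = 1 := if_pos hx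

lemma withLarge_of_le (hx : x ≤ θ) : withLarge θ h x = h x := if_neg hx.not_gt

theorem isCoveringPrice_withLarge (h_zero : h 0 = 0) (h_mono : Monotone h)
    (h_add : ∀ x y, h (x + y) ≤ h x + h y) (h_one : 1 ≤ h 1) :
    IsCoveringPrice (withLarge θ h) := by
  have nonneg : ∀ x, 0 ≤ x → 0 ≤ withLarge θ h x := by
    intro x hx
    rcases lt_or_ge θ x with hlarge | hsmall
    · simp [withLarge_of_lt hlarge]
    · rw [withLarge_of_le hsmall, ← h_zero]
      exact h_mono hx
  refine ⟨nonneg, fun s hs hsum => ?_⟩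
  by_cases hlarge : ∃ x ∈ s, θ < x
  · obtain ⟨x, hxs, hx⟩ := hlarge
    rw [← withLarge_of_lt (h := h) hx]
    refine Multiset.single_le_sum (fun y hy => ?_) _ (Multiset.mem_map_of_mem _ hxs)
    obtain ⟨z, hz, rfl⟩ := Multiset.mem_map.1 hy
    exact nonneg z (hs z hz)
  · push Not at hlarge
    rw [Multiset.map_congr rfl fun x hx => withLarge_of_le (h := h) (hlarge x hx)]
    calc 1 ≤ h 1 := h_one
      _ ≤ h s.sum := h_mono hsum
      _ ≤ (s.map h).sum := Multiset.le_sum_of_subadditive h h_zero.le h_add s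

theorem isCoveringPrice_withLarge_stairPrice {N : ℕ} {p r : ℝ} (hr : 0 < r) (hrp : r ≤ p)
    (hpr : N * p + r = 1) : IsCoveringPrice (withLarge θ (stairPrice (N + 1) p r)) := by
  refine isCoveringPrice_withLarge (stairPrice_zero _ _ _) (stairPrice_mono hr hrp)
    (stairPrice_add_le hr hrp) ?_
  have := div_le_stairPrice (N := N + 1) hr hrp hpr.le
  rwa [Nat.cast_add_one, div_self (by positivity)] at this

lemma IsCoveringPrice.one_le_finset_sum {ι : Type*} {g : ℝ → ℝ} (hg : IsCoveringPrice g)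
    {S : Finset ι} {x : ι → ℝ} (hx : ∀ j ∈ S, 0 ≤ x j) (hsum : 1 ≤ ∑ j ∈ S, x j) :
    1 ≤ ∑ j ∈ S, g (x j) := by
  have := hg.one_le_sum (S.1.map x) (by simpa using hx) hsum
  rwa [Multiset.map_map] at this

end CoveringPrice

section Load

variable {κ : Type*} [DecidableEq κ] {σ : ℕ → κ} {v F : ℕ → ℝ}

/-- The total `F` of the items among `0, …, T - 1` that the assignment `σ` of items to bins puts
into bin `i`. For `F = v` this is the value of the bin at time `T`, for `F = g ∘ v` its cost. -/
def load (σ : ℕ → κ) (F : ℕ → ℝ) (T : ℕ) (i : κ) : ℝ := ∑ t ∈ range T with σ t = i, F t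

@[simp]
lemma load_zero (σ : ℕ → κ) (F : ℕ → ℝ) (i : κ) : load σ F 0 i = 0 := by simp [load]

lemma load_succ (σ : ℕ → κ) (F : ℕ → ℝ) (T : ℕ) (i : κ) :
    load σ F (T + 1) i = load σ F T i + if σ T = i then F T else 0 := by
  simp only [load, sum_filter, sum_range_succ]

lemma load_succ_self (σ : ℕ → κ) (F : ℕ → ℝ) (T : ℕ) :
    load σ F (T + 1) (σ T) = load σ F T (σ T) + F T := by
  simp [load_succ]

lemma load_succ_of_ne {T : ℕ} {i : κ} (hi : σ T ≠ i) : load σ F (T + 1) i = load σ F T i := by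
  simp [load_succ, hi]

lemma load_mono (hF : ∀ t, 0 ≤ F t) (i : κ) : Monotone fun T => load σ F T i :=
  fun _ _ hT => sum_le_sum_of_subset_of_nonneg
    (filter_subset_filter _ (range_subset_range.2 hT)) fun _ _ _ => hF _

lemma sum_load [Fintype κ] (σ : ℕ → κ) (F : ℕ → ℝ) (T : ℕ) :
    ∑ i, load σ F T i = ∑ t ∈ range T, F t :=
  sum_fiberwise _ _ _

/-- `σ` is a run of the greedy rule known in scheduling as *longest processing time first*: the
items come in decreasing order of value, and each goes to a bin of least value at that time. -/
structure IsLPT (v : ℕ → ℝ) (σ : ℕ → κ) : Prop where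
  nonneg : ∀ t, 0 ≤ v t
  antitone : Antitone v
  greedy : ∀ t i, load σ v t (σ t) ≤ load σ v t i

theorem exists_isLPT [Finite κ] [Nonempty κ] (nonneg : ∀ t, 0 ≤ v t) (antitone : Antitone v) :
    ∃ σ : ℕ → κ, IsLPT v σ := by
  choose argmin hargmin using fun L : κ → ℝ => Finite.exists_min L
  let L : ℕ → κ → ℝ := Nat.rec 0 fun t L i => L i + if argmin L = i then v t else 0
  have hL : ∀ t i, load (fun t => argmin (L t)) v t i = L t i := by
    intro t i
    induction t with
    | zero => simp [L]
    | succ t ih => rw [load_succ, ih]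
  refine ⟨fun t => argmin (L t), nonneg, antitone, fun t i => ?_⟩
  rw [hL, hL]
  exact hargmin (L t) i

namespace IsLPT

lemma load_mono (hσ : IsLPT v σ) (i : κ) : Monotone fun T => load σ v T i :=
  AnyPriceShare.load_mono hσ.nonneg i

lemma load_le_load (hσ : IsLPT v σ) {t T : ℕ} (htT : t ≤ T) (i : κ) :
    load σ v t (σ t) ≤ load σ v T i :=
  (hσ.greedy t i).trans (hσ.load_mono i htT)

lemma load_eq_zero_or_le (hσ : IsLPT v σ) (T : ℕ) (i : κ) :
    load σ v T i = 0 ∨ v T ≤ load σ v T i := by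
  rcases ({t ∈ range T | σ t = i}).eq_empty_or_nonempty with hempty | ⟨t, ht⟩
  · left
    rw [load, hempty, sum_empty]
  · right
    have htT : t < T := mem_range.1 (mem_filter.1 ht).1
    exact (hσ.antitone htT.le).trans (single_le_sum (fun t _ => hσ.nonneg t) ht)

lemma add_le_of_load_add_le (hσ : IsLPT v σ) {t t₀ τ : ℕ} {θ : ℝ} (ht₀ : t₀ ≤ τ)
    (hle₀ : v t₀ ≤ load σ v t₀ (σ t₀)) (hpair : load σ v t₀ (σ t₀) + v t₀ ≤ θ)
    (hle : v t ≤ load σ v t (σ t)) : v t + v τ ≤ θ := by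
  have hτ := hσ.antitone ht₀
  rcases le_total t t₀ with htt₀ | htt₀
  · have := hσ.load_le_load htt₀ (σ t₀)
    linarith
  · have := hσ.antitone htt₀
    linarith

end IsLPT

end Load

section BinInvariant

variable {κ : Type*} [DecidableEq κ] {σ : ℕ → κ} {v : ℕ → ℝ} {θ : ℝ} {g h : ℝ → ℝ}

/-- At time `T`, the value and the cost of each open bin, one worth at most `θ`, are related by `I`,
and each other bin costs at most 1. -/
def BinInvariant (σ : ℕ → κ) (v : ℕ → ℝ) (θ : ℝ) (g : ℝ → ℝ) (I : ℝ → ℝ → Prop) (T : ℕ) : Prop :=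
  ∀ i, (load σ v T i ≤ θ → I (load σ v T i) (load σ (g ∘ v) T i)) ∧
    (θ < load σ v T i → load σ (g ∘ v) T i ≤ 1)

lemma BinInvariant.mono {I J : ℝ → ℝ → Prop} {T : ℕ} (hI : BinInvariant σ v θ g I T)
    (hIJ : ∀ i, load σ v T i ≤ θ → ∀ q, I (load σ v T i) q → J (load σ v T i) q) :
    BinInvariant σ v θ g J T :=
  fun i => ⟨fun hi => hIJ i hi _ ((hI i).1 hi), (hI i).2⟩

theorem BinInvariant.induction {I : ℕ → ℝ → ℝ → Prop} {T₀ T₁ : ℕ} (hT : T₀ ≤ T₁)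
    (hopen : ∀ T < T₁, load σ v T (σ T) ≤ θ)
    (hstart : BinInvariant σ v θ g (I T₀) T₀)
    (hmono : ∀ T ℓ q, I T ℓ q → I (T + 1) ℓ q)
    (hstep : ∀ T, T₀ ≤ T → T < T₁ → ∀ q, I T (load σ v T (σ T)) q →
      (load σ v T (σ T) + v T ≤ θ → I (T + 1) (load σ v T (σ T) + v T) (q + g (v T))) ∧
      (θ < load σ v T (σ T) + v T → q + g (v T) ≤ 1)) :
    BinInvariant σ v θ g (I T₁) T₁ := by
  induction T₁, hT using Nat.le_induction with
  | base => exact hstart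
  | succ T hT ih =>
    have hprev := ih (fun t ht => hopen t (by omega)) fun t h₀ ht => hstep t h₀ (by omega)
    intro i
    rcases eq_or_ne (σ T) i with rfl | hi
    · rw [load_succ_self, load_succ_self]
      exact hstep T hT T.lt_succ_self _ ((hprev _).1 (hopen T T.lt_succ_self))
    · rw [load_succ_of_ne hi, load_succ_of_ne hi]
      exact ⟨fun hle => hmono _ _ _ ((hprev i).1 hle), (hprev i).2⟩

theorem BinInvariant.sum_price_lt_card [Fintype κ] {I : ℝ → ℝ → Prop} {m : ℕ} {i₀ : κ}
    (hI : BinInvariant σ v θ g I m) (hlt : ∀ ℓ q, ℓ ≤ θ → I ℓ q → q < 1)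
    (hi₀ : load σ v m i₀ ≤ θ) : ∑ t ∈ range m, g (v t) < Fintype.card κ := by
  have hle : ∀ i, load σ (g ∘ v) m i ≤ 1 := fun i =>
    (le_or_gt (load σ v m i) θ).elim (fun hi => (hlt _ _ hi ((hI i).1 hi)).le) (hI i).2
  calc ∑ t ∈ range m, g (v t) = ∑ i, load σ (g ∘ v) m i := (sum_load σ (g ∘ v) m).symm
    _ < ∑ _i : κ, (1 : ℝ) :=
      sum_lt_sum (fun i _ => hle i) ⟨i₀, mem_univ _, hlt _ _ hi₀ ((hI i₀).1 hi₀)⟩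
    _ = Fintype.card κ := by simp

theorem IsLPT.binInvariant_price_le (hσ : IsLPT v σ) {T : ℕ}
    (hopen : ∀ t < T, load σ v t (σ t) ≤ θ) (h_zero : h 0 = 0)
    (hpair : ∀ t < T, v t ≤ load σ v t (σ t) →
      (load σ v t (σ t) + v t ≤ θ →
        h (load σ v t (σ t)) + h (v t) ≤ h (load σ v t (σ t) + v t)) ∧
      (θ < load σ v t (σ t) + v t → h (load σ v t (σ t)) + h (v t) ≤ 1)) :
    BinInvariant σ v θ (withLarge θ h) (fun ℓ q => q ≤ h ℓ) T := by
  refine BinInvariant.induction (I := fun _ ℓ q => q ≤ h ℓ) T.zero_le hopen (fun i => ?_)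
    (fun _ _ _ => id) fun t _ ht q hq => ?_
  · simp [h_zero]
  rcases hσ.load_eq_zero_or_le t (σ t) with hempty | hle
  · rw [hempty, h_zero] at hq
    simp only [hempty, zero_add]
    refine ⟨fun hv => ?_, fun hv => ?_⟩
    · rw [withLarge_of_le hv]
      linarith
    · rw [withLarge_of_lt hv]
      linarith
  · rw [withLarge_of_le (hle.trans (hopen t ht))]
    exact ⟨fun hv => by linarith [(hpair t ht hle).1 hv],
      fun hv => by linarith [(hpair t ht hle).2 hv]⟩

theorem IsLPT.binInvariant_stairPrice_two (hσ : IsLPT v σ) {p r : ℝ} {τ : ℕ}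
    (hopen : ∀ t ≤ τ, load σ v t (σ t) ≤ θ) (hp : 0 < p) (hload : load σ v τ (σ τ) ≤ p)
    (hpairs : ∀ t ≤ τ, v t ≤ load σ v t (σ t) → θ < load σ v t (σ t) + v t) :
    BinInvariant σ v θ (withLarge θ (stairPrice 2 p r)) (fun ℓ q => q ≤ stairPrice 2 p r ℓ)
      (τ + 1) := by
  have h_half : ∀ x ≤ p, stairPrice 2 p r x ≤ 1 / 2 := fun x hx => by
    simpa using stairPrice_le_div (N := 2) (k := 1) hp (by simpa)
  refine hσ.binInvariant_price_le (fun t ht => hopen t (by omega)) (stairPrice_zero _ _ _)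
    fun t ht hle => ⟨fun hfits => ?_, fun _ => ?_⟩
  · exact absurd hfits (hpairs t (by omega) hle).not_ge
  · have hloadt : load σ v t (σ t) ≤ p := (hσ.load_le_load (by omega) _).trans hload
    linarith [h_half _ hloadt, h_half _ (hle.trans hloadt)]

theorem IsLPT.binInvariant_stairPrice_three (hσ : IsLPT v σ) {p r : ℝ} {τ : ℕ}
    (hopen : ∀ t ≤ τ, load σ v t (σ t) ≤ θ) (hr : 0 < r) (hrp : r ≤ p)
    (hθ : θ ≤ 2 * p) (hθτ : θ ≤ v τ + p) (hprτ : p + r ≤ 2 * v τ)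
    (hpairs : ∀ t ≤ τ, v t ≤ load σ v t (σ t) → v t + v τ ≤ θ) :
    BinInvariant σ v θ (withLarge θ (stairPrice 3 p r)) (fun ℓ q => q ≤ stairPrice 3 p r ℓ)
      (τ + 1) := by
  have hp : 0 < p := hr.trans_le hrp
  have h_third : ∀ x ≤ p, stairPrice 3 p r x ≤ 1 / 3 := fun x hx => by
    simpa using stairPrice_le_div (N := 3) (k := 1) hp (by simpa)
  have h_two_thirds : ∀ x ≤ θ, stairPrice 3 p r x ≤ 2 / 3 := fun x hx =>
    stairPrice_le_div (k := 2) hp (by push_cast; linarith)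
  have two_thirds_le : ∀ x, p + r ≤ x → 2 / 3 ≤ stairPrice 3 p r x := fun x hx => by
    have := div_le_stairPrice (N := 3) (k := 1) hr hrp (by simpa : _ ≤ x)
    norm_num at this ⊢
    exact this
  refine hσ.binInvariant_price_le (fun t ht => hopen t (by omega)) (stairPrice_zero _ _ _)
    fun t ht hle => ?_
  have hτt : v τ ≤ v t := hσ.antitone (by omega)
  have hvp : v t ≤ p := by linarith [hpairs t (by omega) hle]
  refine ⟨fun hfits => ?_, fun _ => ?_⟩
  · linarith [h_third _ hvp, h_third (load σ v t (σ t)) (by linarith),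
      two_thirds_le (load σ v t (σ t) + v t) (by linarith)]
  · linarith [h_third _ hvp, h_two_thirds _ (hopen t (by omega))]

theorem IsLPT.binInvariant_price_le_linear (hσ : IsLPT v σ) {b : ℝ} {T m : ℕ} (hTm : T ≤ m)
    (hopen : ∀ t < m, load σ v t (σ t) ≤ θ) (hb : 1 ≤ b)
    (h_le : ∀ t, T ≤ t → v t ≤ θ → h (v t) ≤ b * v t)
    (hfit : ∀ t, T ≤ t → t < m → v t ≤ θ → load σ v t (σ t) + v t ≤ 1)
    (hstart : BinInvariant σ v θ (withLarge θ h) (fun ℓ q => q ≤ 1 - b * (1 - ℓ)) T) :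
    BinInvariant σ v θ (withLarge θ h) (fun ℓ q => q ≤ 1 - b * (1 - ℓ)) m := by
  refine BinInvariant.induction (I := fun _ ℓ q => q ≤ 1 - b * (1 - ℓ)) hTm hopen hstart
    (fun _ _ _ => id) fun t hTt htm q hq => ?_
  rcases le_or_gt (v t) θ with hsmall | hlarge
  · have hprice := h_le t hTt hsmall
    have hload := mul_nonneg (zero_le_one.trans hb)
      (sub_nonneg.2 (hfit t hTt htm hsmall))
    rw [withLarge_of_le hsmall]
    exact ⟨fun _ => by linarith, fun _ => by linarith⟩
  · have hempty : load σ v t (σ t) = 0 :=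
      (hσ.load_eq_zero_or_le t (σ t)).resolve_right ((hopen t htm).trans_lt hlarge).not_ge
    rw [hempty] at hq ⊢
    rw [withLarge_of_lt hlarge]
    exact ⟨fun hle => by linarith, fun _ => by linarith⟩

theorem IsLPT.binInvariant_price_le_add (hσ : IsLPT v σ) {b d Q : ℝ} {T m : ℕ} (hTm : T ≤ m)
    (hopen : ∀ t < m, load σ v t (σ t) ≤ θ) (hb : 0 ≤ b)
    (hsmall : ∀ t, T ≤ t → v t ≤ θ)
    (h_linear : ∀ t, T ≤ t → h (v t) ≤ b * v t)
    (h_const : ∀ t, T ≤ t → h (v t) ≤ 1 - Q)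
    (hQ : Q + b * d + b * d ≤ 1)
    (hstart : BinInvariant σ v θ (withLarge θ h) (fun ℓ q => θ - d < ℓ ∧ q ≤ Q) T) :
    BinInvariant σ v θ (withLarge θ h) (fun _ q => q ≤ Q + b * d) m := by
  -- The first item that fits into an open bin is worth at most `d`, and so are all later ones.
  suffices hinv : BinInvariant σ v θ (withLarge θ h)
      (fun ℓ q => θ - d < ℓ ∧ (q ≤ Q ∨ v m ≤ d ∧ q ≤ Q + b * (ℓ - (θ - d)))) m by
    refine hinv.mono fun i hi q ⟨hload, hq⟩ => ?_
    have hbd : b * (load σ v m i - (θ - d)) ≤ b * d := by gcongr; linarith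
    have hload_nonneg := mul_nonneg hb (sub_pos.2 hload).le
    rcases hq with hq | ⟨-, hq⟩ <;> linarith
  refine BinInvariant.induction
    (I := fun t ℓ q => θ - d < ℓ ∧ (q ≤ Q ∨ v t ≤ d ∧ q ≤ Q + b * (ℓ - (θ - d)))) hTm hopen
    (hstart.mono fun i _ q ⟨hload, hq⟩ => ⟨hload, Or.inl hq⟩)
    (fun t ℓ q ⟨hload, hq⟩ => ⟨hload, hq.imp_right fun ⟨hv, hq⟩ =>
      ⟨(hσ.antitone t.le_succ).trans hv, hq⟩⟩) fun t hTt htm q ⟨hload, hq⟩ => ?_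
  have hv_nonneg := hσ.nonneg t
  have hprice := h_linear t hTt
  have hload_nonneg := mul_nonneg hb (sub_pos.2 hload).le
  rw [withLarge_of_le (hsmall t hTt)]
  refine ⟨fun hfits => ⟨by linarith, Or.inr ⟨?_, ?_⟩⟩, fun _ => ?_⟩
  · linarith [hσ.antitone t.le_succ]
  · rcases hq with hq | ⟨-, hq⟩ <;> linarith
  · rcases hq with hq | ⟨hv, hq⟩
    · linarith [h_const t hTt]
    · have hbv : b * v t ≤ b * d := by gcongr
      have hbd : b * (load σ v t (σ t) - (θ - d)) ≤ b * d := by gcongr; linarith [hopen t htm]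
      linarith

end BinInvariant

section Certificate

variable {κ : Type*} [DecidableEq κ] [Fintype κ] {σ : ℕ → κ} {v : ℕ → ℝ} {θ : ℝ} {m : ℕ} {i₀ : κ}

theorem IsLPT.exists_isCoveringPrice_of_forall_load_add_le_one (hσ : IsLPT v σ) (hθ : θ < 1)
    (hi₀ : load σ v m i₀ ≤ θ)
    (hfit : ∀ t < m, v t ≤ θ → load σ v t (σ t) + v t ≤ 1) :
    ∃ g, IsCoveringPrice g ∧ ∑ t ∈ range m, g (v t) < Fintype.card κ := by
  have hopen : ∀ t < m, load σ v t (σ t) ≤ θ := fun t ht => (hσ.load_le_load ht.le i₀).trans hi₀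
  refine ⟨withLarge θ id,
    isCoveringPrice_withLarge rfl monotone_id (fun _ _ => le_rfl) le_rfl,
    (hσ.binInvariant_price_le_linear m.zero_le hopen le_rfl (by simp) (fun t _ => hfit t)
      (fun i => by simp)).sum_price_lt_card (fun ℓ q hℓ hq => by linarith) hi₀⟩

theorem IsLPT.exists_isCoveringPrice_of_forall_lt_load_add (hσ : IsLPT v σ) (hθ : θ < 1)
    (hi₀ : load σ v m i₀ ≤ θ) {τ : ℕ} (hτ : τ < m) (hsmall : v τ ≤ θ)
    (hover : 1 < load σ v τ (σ τ) + v τ)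
    (hfit : ∀ t, τ < t → t < m → v t ≤ θ → load σ v t (σ t) + v t ≤ 1)
    (hpairs : ∀ t ≤ τ, v t ≤ load σ v t (σ t) → θ < load σ v t (σ t) + v t) :
    ∃ g, IsCoveringPrice g ∧ ∑ t ∈ range m, g (v t) < Fintype.card κ := by
  have hopen : ∀ t < m, load σ v t (σ t) ≤ θ := fun t ht => (hσ.load_le_load ht.le i₀).trans hi₀
  set a := load σ v τ (σ τ)
  have haθ : a ≤ θ := hopen τ hτ
  have hva : v τ ≤ a := (hσ.load_eq_zero_or_le τ (σ τ)).resolve_left fun hempty => by linarith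
  have hr : 0 < 1 - a := by linarith
  have hrp : 1 - a ≤ a := by linarith
  set h := stairPrice 2 a (1 - a)
  set b := ((2 : ℕ) * (1 - a))⁻¹ with hb
  have hba : b * (1 - a) = 1 / 2 := by rw [hb]; field_simp; norm_num
  have hb_one : 1 ≤ b := by rw [hb]; exact (one_le_inv₀ (by positivity)).2 (by norm_num; linarith)
  have h_top : ∀ x, a ≤ x → h x ≤ 1 - b * (1 - x) := fun x hx => by
    have := stairPrice_le_add_mul (N := 2) (k := 1) hr hrp (by simpa : _ ≤ x)
    rw [Nat.cast_one, one_mul, ← hb, Nat.cast_ofNat] at this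
    linarith
  have hmiddle : BinInvariant σ v θ (withLarge θ h) (fun ℓ q => q ≤ 1 - b * (1 - ℓ)) (τ + 1) :=
    (hσ.binInvariant_stairPrice_two (fun t ht => hopen t (by omega)) (hr.trans_le hrp) le_rfl
      hpairs).mono fun i _ q hq => hq.trans (h_top _ (hσ.load_le_load τ.le_succ i))
  refine ⟨withLarge θ h,
    isCoveringPrice_withLarge_stairPrice (N := 1) hr hrp (by simp),
    (hσ.binInvariant_price_le_linear (by omega) hopen hb_one
      (fun t _ _ => stairPrice_le_mul hr hrp (hσ.nonneg t))
      (fun t ht => hfit t (by omega)) hmiddle).sum_price_lt_card (fun ℓ q hℓ hq => ?_) hi₀⟩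
  have : 0 < b * (1 - ℓ) := mul_pos (by linarith) (by linarith)
  linarith

theorem IsLPT.exists_isCoveringPrice_of_load_add_le (hσ : IsLPT v σ)
    (hi₀ : load σ v m i₀ ≤ 3 / 4) {τ : ℕ} (hτ : τ < m)
    (hover : 1 < load σ v τ (σ τ) + v τ) {t₀ : ℕ} (ht₀ : t₀ ≤ τ)
    (hle₀ : v t₀ ≤ load σ v t₀ (σ t₀)) (hpair : load σ v t₀ (σ t₀) + v t₀ ≤ 3 / 4) :
    ∃ g, IsCoveringPrice g ∧ ∑ t ∈ range m, g (v t) < Fintype.card κ := by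
  have hopen : ∀ t < m, load σ v t (σ t) ≤ 3 / 4 :=
    fun t ht => (hσ.load_le_load ht.le i₀).trans hi₀
  have hlate : ∀ t, τ + 1 ≤ t → v t ≤ v τ := fun t ht => hσ.antitone (by omega)
  have hs_large : 1 / 4 < v τ := by linarith [hopen τ hτ]
  have hs_small : v τ ≤ 3 / 8 := by linarith [hσ.antitone ht₀]
  -- An item that joins a nonempty bin up to time `τ` is worth at most `p`, hence costs at most a
  -- third. The choice of `r` makes `2 * p + r = 1`, so that the third step is climbed at 1.
  set p := 3 / 4 - v τ with hp
  set r := 2 * v τ - 1 / 2 with hr_def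
  have hr : 0 < r := by linarith
  have hrp : r ≤ p := by linarith
  have hearly := hσ.binInvariant_stairPrice_three (fun t ht => hopen t (by omega)) hr hrp
    (by linarith) (by linarith) (by linarith)
    (fun t _ hle => hσ.add_le_of_load_add_le ht₀ hle₀ hpair hle)
  have hmiddle : BinInvariant σ v (3 / 4) (withLarge (3 / 4) (stairPrice 3 p r))
      (fun ℓ q => 3 / 4 - r / 2 < ℓ ∧ q ≤ 2 / 3) (τ + 1) :=
    hearly.mono fun i hi q hq => ⟨by linarith [hσ.load_le_load τ.le_succ i],
      hq.trans (stairPrice_le_div (hr.trans_le hrp) (k := 2) (by push_cast; linarith))⟩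
  have hslope : ((3 : ℕ) * r)⁻¹ * (r / 2) = 1 / 6 := by field_simp; norm_num
  refine ⟨withLarge (3 / 4) (stairPrice 3 p r),
    isCoveringPrice_withLarge_stairPrice (N := 2) hr hrp (by push_cast; linarith),
    (hσ.binInvariant_price_le_add (by omega) hopen (by positivity)
      (fun t ht => by linarith [hlate t ht])
      (fun t _ => stairPrice_le_mul hr hrp (hσ.nonneg t)) (fun t ht => ?_)
      (by linarith) hmiddle).sum_price_lt_card (fun ℓ q _ hq => by linarith) hi₀⟩
  calc stairPrice 3 p r (v t) ≤ (1 : ℕ) / (3 : ℕ) :=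
        stairPrice_le_div (hr.trans_le hrp) (by rw [Nat.cast_one]; linarith [hlate t ht])
    _ = 1 - 2 / 3 := by norm_num

theorem IsLPT.exists_isCoveringPrice (hσ : IsLPT v σ) (hi₀ : load σ v m i₀ ≤ 3 / 4) :
    ∃ g, IsCoveringPrice g ∧ ∑ t ∈ range m, g (v t) < Fintype.card κ := by
  let overfull := {t ∈ range m | v t ≤ 3 / 4 ∧ 1 < load σ v t (σ t) + v t}
  have mem_overfull {t : ℕ} :
      t ∈ overfull ↔ t < m ∧ v t ≤ 3 / 4 ∧ 1 < load σ v t (σ t) + v t := by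
    simp [overfull]
  rcases overfull.eq_empty_or_nonempty with hover | hover
  · refine hσ.exists_isCoveringPrice_of_forall_load_add_le_one (by norm_num) hi₀
      fun t ht hsmall => ?_
    by_contra! hlt
    exact (hover ▸ notMem_empty t : t ∉ overfull) (mem_overfull.2 ⟨ht, hsmall, hlt⟩)
  obtain ⟨hτm, hτ_small, hτ⟩ := mem_overfull.1 (overfull.max'_mem hover)
  set τ := overfull.max' hover
  by_cases hpair : ∃ t ≤ τ, v t ≤ load σ v t (σ t) ∧ load σ v t (σ t) + v t ≤ 3 / 4
  · obtain ⟨t₀, ht₀, hle, hfit⟩ := hpair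
    exact hσ.exists_isCoveringPrice_of_load_add_le hi₀ hτm hτ ht₀ hle hfit
  · push Not at hpair
    refine hσ.exists_isCoveringPrice_of_forall_lt_load_add (by norm_num) hi₀ hτm hτ_small hτ
      (fun t ht htm hsmall => ?_) hpair
    by_contra! hlt
    exact ht.not_ge (overfull.le_max' t (mem_overfull.2 ⟨htm, hsmall, hlt⟩))

end Certificate

section Share

variable {ι : Type*} {M : Finset ι} {b : ℝ} {w : ι → ℝ}

theorem exists_affordable_APS_le (v : Finset ι → ℝ) (hb : 0 ≤ b) {p : ι → ℝ}
    (hp : ∀ j ∈ M, 0 ≤ p j) (hp_sum : ∑ j ∈ M, p j = 1) :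
    ∃ S ⊆ M, ∑ j ∈ S, p j ≤ b ∧ APS b v M ≤ v S := by
  let values (p : ι → ℝ) : Set ℝ := {u | ∃ S, S ⊆ M ∧ ∑ j ∈ S, p j ≤ b ∧ u = v S}
  have finite_values (p : ι → ℝ) : (values p).Finite :=
    (M.powerset.image v).finite_toSet.subset fun u ⟨S, hS, _, hu⟩ =>
      mem_coe.2 (mem_image.2 ⟨S, mem_powerset.2 hS, hu.symm⟩)
  have empty_mem (p : ι → ℝ) : v ∅ ∈ values p := ⟨∅, empty_subset M, by simpa, rfl⟩
  obtain ⟨S, hSM, hSb, hS⟩ := Set.Nonempty.csSup_mem ⟨_, empty_mem p⟩ (finite_values p)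
  refine ⟨S, hSM, hSb, ?_⟩
  rw [← hS]
  refine csInf_le ⟨v ∅, ?_⟩ ⟨p, hp, hp_sum, rfl⟩
  rintro _ ⟨q, -, -, rfl⟩
  exact le_csSup (finite_values q).bddAbove (empty_mem q)

lemma APS_le_sum (hb : 0 ≤ b) (hw : ∀ j ∈ M, 0 ≤ w j) :
    APS b (fun S => ∑ j ∈ S, w j) M ≤ ∑ j ∈ M, w j := by
  classical
  rcases M.eq_empty_or_nonempty with rfl | ⟨j₀, hj₀⟩
  · simp [APS]
  obtain ⟨S, hSM, -, hS⟩ := exists_affordable_APS_le (fun S => ∑ j ∈ S, w j) hb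
    (M := M) (p := fun j => if j = j₀ then 1 else 0) (fun j _ => by positivity) (by simp [hj₀])
  exact hS.trans (sum_le_sum_of_subset_of_nonneg hSM fun j hj _ => hw j hj)

theorem IsCoveringPrice.one_le_mul_sum {g : ℝ → ℝ} (hg : IsCoveringPrice g) (hb : 0 ≤ b)
    (hw : ∀ j ∈ M, 0 ≤ w j) (hAPS : 0 < APS b (fun S => ∑ j ∈ S, w j) M) :
    1 ≤ b * ∑ j ∈ M, g (w j / APS b (fun S => ∑ j ∈ S, w j) M) := by
  set z := APS b (fun S => ∑ j ∈ S, w j) M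
  set P := ∑ j ∈ M, g (w j / z)
  have hwz : ∀ j ∈ M, 0 ≤ w j / z := fun j hj => div_nonneg (hw j hj) hAPS.le
  have one_le_price {S : Finset ι} (hSM : S ⊆ M) (hS : z ≤ ∑ j ∈ S, w j) :
      1 ≤ ∑ j ∈ S, g (w j / z) :=
    hg.one_le_finset_sum (fun j hj => hwz j (hSM hj)) (by rwa [← sum_div, one_le_div hAPS])
  have hP : 0 < P := zero_lt_one.trans_le (one_le_price Subset.rfl (APS_le_sum hb hw))
  obtain ⟨S, hSM, hSb, hS⟩ := exists_affordable_APS_le (fun S => ∑ j ∈ S, w j) hb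
    (p := fun j => g (w j / z) / P)
    (fun j hj => div_nonneg (hg.nonneg _ (hwz j hj)) hP.le)
    (by rw [← sum_div]; exact div_self hP.ne')
  calc 1 ≤ ∑ j ∈ S, g (w j / z) := one_le_price hSM hS
    _ ≤ b * P := by rwa [← sum_div, div_le_iff₀ hP] at hSb

end Share

section Enumeration

variable {ι : Type*}

theorem exists_antitone_enumeration (M : Finset ι) (w : ι → ℝ) (hw : ∀ j ∈ M, 0 ≤ w j) :
    ∃ (rank : ι → ℕ) (v : ℕ → ℝ), (∀ t, 0 ≤ v t) ∧ Antitone v ∧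
      Set.BijOn rank M (range #M) ∧ ∀ j ∈ M, v (rank j) = w j := by
  classical
  let e := M.equivFin
  let value : Fin #M → ℝ := fun k => w (e.symm k)
  let sort := Tuple.sort fun k => -value k
  have hsort : Antitone (value ∘ sort) := fun k l hkl =>
    neg_le_neg_iff.1 (Tuple.monotone_sort (fun k => -value k) hkl)
  have value_nonneg (k : Fin #M) : 0 ≤ value k := hw _ (e.symm k).2
  refine ⟨fun j => if hj : j ∈ M then sort.symm (e ⟨j, hj⟩) else 0,
    fun t => if ht : t < #M then value (sort ⟨t, ht⟩) else 0, fun t => ?_, fun s t hst => ?_,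
    ⟨fun j hj => ?_, fun j hj k hk hjk => ?_, fun t ht => ?_⟩, fun j hj => ?_⟩
  · dsimp only
    split_ifs
    exacts [value_nonneg _, le_rfl]
  · dsimp only
    split_ifs with ht hs hs
    · exact hsort (Fin.mk_le_mk.2 hst)
    · omega
    · exact value_nonneg _
    · exact le_rfl
  · simp [mem_coe.1 hj]
  · simpa [mem_coe.1 hj, mem_coe.1 hk, Fin.val_inj] using hjk
  · have ht' : t < #M := mem_range.1 (mem_coe.1 ht)
    exact ⟨e.symm (sort ⟨t, ht'⟩), (e.symm (sort ⟨t, ht'⟩)).2, by simp⟩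
  · simp [hj, value]

lemma sum_price_range_card {M : Finset ι} {rank : ι → ℕ} {v : ℕ → ℝ} {w : ι → ℝ}
    (hrank : Set.BijOn rank M (range #M)) (hv : ∀ j ∈ M, v (rank j) = w j) (g : ℝ → ℝ) :
    ∑ t ∈ range #M, g (v t) = ∑ j ∈ M, g (w j) :=
  (sum_nbij rank hrank.mapsTo hrank.injOn hrank.surjOn fun j hj => by rw [hv j hj]).symm

lemma load_card_eq_sum {M : Finset ι} {rank : ι → ℕ} {v : ℕ → ℝ} {w : ι → ℝ} {κ : Type*}
    [DecidableEq κ] (hrank : Set.BijOn rank M (range #M)) (hv : ∀ j ∈ M, v (rank j) = w j)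
    (σ : ℕ → κ) (i : κ) : load σ v #M i = ∑ j ∈ M with σ (rank j) = i, w j := by
  rw [load, sum_filter, sum_filter]
  exact (sum_nbij rank hrank.mapsTo hrank.injOn hrank.surjOn fun j hj => by rw [hv j hj]).symm

lemma isPartition_filter [DecidableEq ι] (M : Finset ι) {n : ℕ} (c : ι → Fin n) :
    IsPartition M fun i => {j ∈ M | c j = i} := by
  refine ⟨fun i => filter_subset _ _, fun i j hij => ?_, fun x hx => ⟨c x, by simp [hx]⟩⟩
  rw [disjoint_filter]
  rintro x - rfl
  exact hij

end Enumeration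

end AnyPriceShare

open AnyPriceShare

/-- For `n` agents with identical additive valuations and equal entitlements `1/n`,
provided the AnyPrice share is positive, there is an allocation giving every agent
strictly more than a 3/4 fraction of her AnyPrice share. -/
theorem identical_valuations_three_quarters_aps {ι : Type*} [DecidableEq ι] (n : ℕ)
    (hn : 0 < n) (M : Finset ι) (w : ι → ℝ) (hw : ∀ j ∈ M, 0 ≤ w j)
    (hAPS : 0 < APS (1 / (n : ℝ)) (fun S => ∑ j ∈ S, w j) M) :
    ∃ A : Fin n → Finset ι, IsPartition M A ∧
      ∀ i, (3 / 4) * APS (1 / (n : ℝ)) (fun S => ∑ j ∈ S, w j) M < ∑ j ∈ A i, w j := by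
  have : Nonempty (Fin n) := ⟨⟨0, hn⟩⟩
  set z := APS (1 / (n : ℝ)) (fun S => ∑ j ∈ S, w j) M
  obtain ⟨rank, v, v_nonneg, v_antitone, hrank, hv⟩ :=
    exists_antitone_enumeration M (fun j => w j / z) fun j hj => div_nonneg (hw j hj) hAPS.le
  obtain ⟨σ, hσ⟩ := exists_isLPT (κ := Fin n) v_nonneg v_antitone
  refine ⟨fun i => {j ∈ M | σ (rank j) = i}, isPartition_filter M _, fun i => ?_⟩
  rw [← lt_div_iff₀ hAPS, sum_div, ← load_card_eq_sum hrank hv]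
  by_contra! hpoor
  obtain ⟨g, hg, hcheap⟩ := hσ.exists_isCoveringPrice hpoor
  rw [sum_price_range_card hrank hv, Fintype.card_fin] at hcheap
  have hcover := hg.one_le_mul_sum (by positivity) hw hAPS
  rw [one_div_mul_eq_div, one_le_div (by positivity)] at hcover
  exact hcover.not_gt hcheap
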